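/- (Triangular structure of products.) Let k ∈ ℕ, let β₁, …, β_{k+1} be populated multi-indices, and set β := e_k + β₁ + ⋯ + β_{k+1} (with e_k the unit multi-index in the variable z_k). Then β_i ≺ β for every i = 1, …, k+1, and |β₁| + ⋯ + |β_{k+1}| = |β|. -/

import Mathlib

open Finsupp

noncomputable section

/-- The index set `I`: symbols `z_k` for `k : ℕ` (left summand) and `z_n` for
`n ∈ ℕ² \ {(0,0)}` (right summand). -/
abbrev RSIdx : Type := ℕ ⊕ {n : ℕ × ℕ // n ≠ (0, 0)}

/-- Multi-indices: finitely supported functions from the index set to `ℕ`. -/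
abbrev MIdx : Type := RSIdx →₀ ℕ

/-- The unit multi-index `e_k`. -/
def eK (k : ℕ) : MIdx := Finsupp.single (Sum.inl k) 1

/-- The unit multi-index `e_n` for `n ≠ (0,0)`. -/
def eN (n : {n : ℕ × ℕ // n ≠ (0, 0)}) : MIdx := Finsupp.single (Sum.inr n) 1

/-- The scaled length `[β] = Σ_k k·β(k) − Σ_{n≠(0,0)} β(n)`. -/
def slen (β : MIdx) : ℤ :=
  β.sum fun i m =>
    match i with
    | Sum.inl k => (k : ℤ) * (m : ℤ)
    | Sum.inr _ => -(m : ℤ)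

/-- The parabolic length `|n| = n₁ + 2 n₂` of `n ∈ ℕ²`. -/
def plen (n : ℕ × ℕ) : ℕ := n.1 + 2 * n.2

/-- The polynomial part `|β|_p = Σ_{n≠(0,0)} |n|·β(n)`. -/
def polyPart (β : MIdx) : ℕ :=
  β.sum fun i m =>
    match i with
    | Sum.inl _ => 0
    | Sum.inr n => plen n.val * m

/-- The homogeneity `|β| = α(1+[β]) + |β|_p`. -/
def homog (α : ℝ) (β : MIdx) : ℝ := α * (1 + (slen β : ℝ)) + (polyPart β : ℝ)

/-- `β` is purely polynomial iff `β = e_n` for some `n ≠ (0,0)`. -/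
def PurelyPoly (β : MIdx) : Prop := ∃ n, β = eN n

/-- `β` is populated iff it is purely polynomial or `[β] ≥ 0`. -/
def Populated (β : MIdx) : Prop := PurelyPoly β ∨ 0 ≤ slen β

/-- The ordinal `|β|_≺ = [β] + (1/2)|β|_p + (1/4)β(0)`. -/
def precNorm (β : MIdx) : ℝ :=
  (slen β : ℝ) + (polyPart β : ℝ) / 2 + (β (Sum.inl 0) : ℝ) / 4

/-!
The functional `|·|_≺` is additive. A populated multi-index has `|β|_≺ ≥ -1/2`, with `e_n`,
`|n| = 1`, as the extreme case, so the `k` factors other than `β_i` cost at most `k/2`. This is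
strictly less than `|e_k|_≺`: for `k > 0` because `[e_k] = k`, for `k = 0` because of the term
`β(0)/4`.

The homogeneity is `α` plus an additive functional, so merging `k + 1` factors into one loses `kα`,
which the contribution `α[e_k] = αk` of `e_k` restores.
-/

lemma slen_add (β γ : MIdx) : slen (β + γ) = slen β + slen γ := by
  refine Finsupp.sum_add_index' ?_ ?_
  · rintro (k | n) <;> simp
  · rintro (k | n) x y <;> push_cast <;> ring

lemma polyPart_add (β γ : MIdx) : polyPart (β + γ) = polyPart β + polyPart γ := by
  refine Finsupp.sum_add_index' ?_ ?_
  · rintro (_ | n) <;> simp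
  · rintro (_ | n) x y <;> ring

lemma slen_eK (k : ℕ) : slen (eK k) = k := by
  simp [slen, eK]

lemma polyPart_eK (k : ℕ) : polyPart (eK k) = 0 := by
  simp [polyPart, eK]

lemma slen_eN (n : {n : ℕ × ℕ // n ≠ (0, 0)}) : slen (eN n) = -1 := by
  simp [slen, eN]

lemma polyPart_eN (n : {n : ℕ × ℕ // n ≠ (0, 0)}) : polyPart (eN n) = plen n := by
  simp [polyPart, eN]

lemma one_le_plen {n : ℕ × ℕ} (hn : n ≠ (0, 0)) : 1 ≤ plen n := by
  contrapose! hn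
  unfold plen at hn
  ext <;> dsimp only <;> omega

lemma precNorm_add (β γ : MIdx) : precNorm (β + γ) = precNorm β + precNorm γ := by
  simp only [precNorm, slen_add, polyPart_add, Finsupp.add_apply]
  push_cast
  ring

lemma precNorm_sum {ι : Type*} (s : Finset ι) (β : ι → MIdx) :
    precNorm (∑ i ∈ s, β i) = ∑ i ∈ s, precNorm (β i) :=
  map_sum (AddMonoidHom.mk' precNorm precNorm_add) β s

lemma slen_add_half_polyPart_le_precNorm (β : MIdx) :
    (slen β : ℝ) + (polyPart β : ℝ) / 2 ≤ precNorm β :=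
  le_add_of_nonneg_right (by positivity)

lemma half_lt_precNorm_eK (k : ℕ) : (k : ℝ) / 2 < precNorm (eK k) := by
  rcases k.eq_zero_or_pos with rfl | hk
  · rw [precNorm, slen_eK, polyPart_eK]
    simp [eK]
  · have hle := slen_add_half_polyPart_le_precNorm (eK k)
    rw [slen_eK, polyPart_eK] at hle
    have hk' : (0 : ℝ) < k := Nat.cast_pos.2 hk
    push_cast at hle
    linarith

lemma neg_half_le_precNorm_eN (n : {n : ℕ × ℕ // n ≠ (0, 0)}) :
    -(1 / 2 : ℝ) ≤ precNorm (eN n) := by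
  have hle := slen_add_half_polyPart_le_precNorm (eN n)
  rw [slen_eN, polyPart_eN] at hle
  have hn : (1 : ℝ) ≤ plen n := Nat.one_le_cast.2 (one_le_plen n.2)
  push_cast at hle
  linarith

lemma precNorm_nonneg_of_slen_nonneg {β : MIdx} (hβ : 0 ≤ slen β) : 0 ≤ precNorm β := by
  have : (0 : ℝ) ≤ slen β := Int.cast_nonneg hβ
  unfold precNorm
  positivity

lemma Populated.neg_half_le_precNorm {β : MIdx} (hβ : Populated β) :
    -(1 / 2 : ℝ) ≤ precNorm β := by
  rcases hβ with ⟨n, rfl⟩ | hβ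
  · exact neg_half_le_precNorm_eN n
  · linarith [precNorm_nonneg_of_slen_nonneg hβ]

lemma neg_half_card_le_precNorm_sum {ι : Type*} {s : Finset ι} {β : ι → MIdx}
    (hβ : ∀ i ∈ s, Populated (β i)) : -((s.card : ℝ) / 2) ≤ precNorm (∑ i ∈ s, β i) :=
  calc -((s.card : ℝ) / 2) = s.card • (-(1 / 2) : ℝ) := by rw [nsmul_eq_mul]; ring
    _ ≤ ∑ i ∈ s, precNorm (β i) :=
      s.card_nsmul_le_sum _ _ fun i hi ↦ (hβ i hi).neg_half_le_precNorm
    _ = precNorm (∑ i ∈ s, β i) := (precNorm_sum s β).symm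

lemma precNorm_lt_precNorm_eK_add_sum {ι : Type*} {k : ℕ} {s : Finset ι} {β : ι → MIdx} {i : ι}
    (hi : i ∈ s) (hs : s.card ≤ k + 1) (hβ : ∀ j ∈ s, j ≠ i → Populated (β j)) :
    precNorm (β i) < precNorm (eK k + ∑ j ∈ s, β j) := by
  classical
  have hcard : ((s.erase i).card : ℝ) ≤ k := by
    rw [Finset.card_erase_of_mem hi]
    exact_mod_cast Nat.sub_le_of_le_add hs
  have hrest : -(((s.erase i).card : ℝ) / 2) ≤ precNorm (∑ j ∈ s.erase i, β j) :=
    neg_half_card_le_precNorm_sum fun j hj ↦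
      hβ j (Finset.mem_of_mem_erase hj) (Finset.ne_of_mem_erase hj)
  rw [← Finset.add_sum_erase s β hi, precNorm_add, precNorm_add]
  linarith [half_lt_precNorm_eK k]

lemma homog_add (α : ℝ) (β γ : MIdx) : homog α (β + γ) = homog α β + homog α γ - α := by
  simp only [homog, slen_add, polyPart_add]
  push_cast
  ring

lemma homog_sum (α : ℝ) {ι : Type*} (s : Finset ι) (β : ι → MIdx) :
    homog α (∑ i ∈ s, β i) = α + ∑ i ∈ s, (homog α (β i) - α) := by
  have hadd (β γ : MIdx) : homog α (β + γ) - α = (homog α β - α) + (homog α γ - α) := by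
    rw [homog_add]
    ring
  rw [← sub_eq_iff_eq_add']
  exact map_sum (AddMonoidHom.mk' (fun β ↦ homog α β - α) hadd) β s

lemma homog_eK (α : ℝ) (k : ℕ) : homog α (eK k) = α * (1 + k) := by
  simp [homog, slen_eK, polyPart_eK]

lemma sum_homog_eq_homog_eK_add_sum (α : ℝ) {ι : Type*} {k : ℕ} {s : Finset ι}
    (hs : s.card = k + 1) (β : ι → MIdx) :
    ∑ i ∈ s, homog α (β i) = homog α (eK k + ∑ i ∈ s, β i) := by
  rw [homog_add, homog_eK, homog_sum, Finset.sum_sub_distrib, Finset.sum_const, hs, nsmul_eq_mul]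
  push_cast
  ring

/-- Triangular structure of products: with populated `β₁, …, β_{k+1}` and
`β = e_k + β₁ + ⋯ + β_{k+1}`, one has `βᵢ ≺ β` for every `i`, and
`|β₁| + ⋯ + |β_{k+1}| = |β|`. -/
theorem statement15 (k : ℕ) (βs : Fin (k + 1) → MIdx)
    (hpop : ∀ i, Populated (βs i)) :
    (∀ i, precNorm (βs i) < precNorm (eK k + ∑ j, βs j))
    ∧ ∀ α : ℝ, (∑ i, homog α (βs i)) = homog α (eK k + ∑ j, βs j) := by
  have hcard : (Finset.univ : Finset (Fin (k + 1))).card = k + 1 := Finset.card_fin (k + 1)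
  exact ⟨fun i ↦ precNorm_lt_precNorm_eK_add_sum (Finset.mem_univ i) hcard.le fun j _ _ ↦ hpop j,
    fun α ↦ sum_homog_eq_homog_eK_add_sum α hcard βs⟩
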